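/- (Local sector bound for tanh.) Let μ̄ > 0 and let α := tanh(μ̄)/μ̄. Then for every real v with |v| ≤ μ̄, one has α v² ≤ v · tanh(v) ≤ v². That is, tanh lies in the local sector [tanh(μ̄)/μ̄, 1] on the interval [−μ̄, μ̄]. -/

import Mathlib

lemma aux_convex : ConvexOn ℝ (Set.Ici 0) Real.sinh := by
  apply MonotoneOn.convexOn_of_deriv (convex_Ici 0) Real.continuous_sinh.continuousOn
    Real.differentiable_sinh.differentiableOn
  rw [interior_Ici, Real.deriv_sinh]
  intro a ha b hb hab
  have ha' : (0:ℝ) < a := ha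
  rw [Real.cosh_le_cosh, abs_of_pos ha', abs_of_pos (ha'.trans_le hab)]
  exact hab

lemma aux_star (d s : ℝ) (hd : 0 ≤ d) (hs : 0 < s) (hds : d ≤ s) :
    s * Real.sinh d ≤ d * Real.sinh s := by
  have h := aux_convex.2 (show s ∈ Set.Ici (0:ℝ) from hs.le)
    (show (0:ℝ) ∈ Set.Ici (0:ℝ) from le_refl (0:ℝ))
    (show 0 ≤ d / s by positivity) (show 0 ≤ 1 - d / s by rw [sub_nonneg, div_le_one hs]; exact hds) (by ring)
  simp only [smul_eq_mul, mul_zero, add_zero, Real.sinh_zero] at h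
  rw [div_mul_cancel₀ _ hs.ne'] at h
  calc s * Real.sinh d ≤ s * (d / s * Real.sinh s) := by gcongr
    _ = d * Real.sinh s := by field_simp

lemma aux_upper (v : ℝ) (hv : 0 ≤ v) : Real.sinh v ≤ v * Real.cosh v := by
  have hd : ∀ x : ℝ, HasDerivAt (fun x => x * Real.cosh x - Real.sinh x)
      (1 * Real.cosh x + x * Real.sinh x - Real.cosh x) x := fun x =>
    ((hasDerivAt_id x).mul (Real.hasDerivAt_cosh x)).sub (Real.hasDerivAt_sinh x)
  have hm : Monotone (fun x => x * Real.cosh x - Real.sinh x) := by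
    apply monotone_of_deriv_nonneg (fun x => (hd x).differentiableAt)
    intro x
    rw [(hd x).deriv]
    have : 0 ≤ x * Real.sinh x := by
      rcases le_total 0 x with h | h
      · exact mul_nonneg h (Real.sinh_nonneg_iff.2 h)
      · exact mul_nonneg_of_nonpos_of_nonpos h (Real.sinh_nonpos_iff.2 h)
    linarith
  have := hm hv
  simp at this
  linarith

lemma aux_pos (μ : ℝ) (hμ : 0 < μ) (v : ℝ) (h0 : 0 ≤ v) (hv : v ≤ μ) :
    (Real.tanh μ / μ) * v ^ 2 ≤ v * Real.tanh v ∧ v * Real.tanh v ≤ v ^ 2 := by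
  have hcv := Real.cosh_pos v
  have hcm := Real.cosh_pos μ
  constructor
  · have h := aux_star (μ - v) (μ + v) (by linarith) (by linarith) (by linarith)
    rw [Real.sinh_add, Real.sinh_sub] at h
    have h2 : Real.tanh μ / μ * v ≤ Real.tanh v := by
      rw [Real.tanh_eq_sinh_div_cosh, Real.tanh_eq_sinh_div_cosh, div_div, div_mul_eq_mul_div,
        div_le_div_iff₀ (by positivity) hcv]
      nlinarith
    nlinarith [mul_le_mul_of_nonneg_left h2 h0]
  · have h2 : Real.tanh v ≤ v := by
      rw [Real.tanh_eq_sinh_div_cosh, div_le_iff₀ hcv]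
      exact aux_upper v h0
    nlinarith

/-- **Local sector bound for tanh:** tanh lies in the sector `[tanh μ̄ / μ̄, 1]` on
    the interval `[−μ̄, μ̄]`. -/
theorem tanh_local_sector (μ : ℝ) (hμ : 0 < μ) (v : ℝ) (hv : |v| ≤ μ) :
    (Real.tanh μ / μ) * v ^ 2 ≤ v * Real.tanh v ∧ v * Real.tanh v ≤ v ^ 2 := by
  rcases le_total 0 v with h | h
  · exact aux_pos μ hμ v h ((le_abs_self v).trans hv)
  · have := aux_pos μ hμ (-v) (by linarith) ((neg_le_abs v).trans hv)
    simpa [Real.tanh_neg] using this
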